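/- Let (u, v) be a C² solution of the p-system on [t₀, ∞) × ℝ, 1-periodic in x. Then there cannot exist two characteristic curves x₁, x₂ : [t₀, ∞) → ℝ, with x₁ a characteristic of the first eigenvalue and x₂ a characteristic of the second eigenvalue, such that −u(t, x₁(t)) → +∞ and −u(t, x₂(t)) → +∞ as t → +∞ (i.e. both of class B₊). -/

import Mathlib

/-!
Write `λ(w) = √(-p'(w))` and `q = qfun p`, so that `q' = -λ`. The functions `v - q(u)` and `v + q(u)`
are Riemann invariants: they are constant along characteristics of the first and of the second
eigenvalue respectively (`riemann_const`). Since `λ` is bounded below by `λ(-1) > 0` on `(-∞, -1]`,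
`q(w) → +∞` as `w → -∞` (`qfun_tendsto`). Hence `v → +∞` along a first characteristic of class `B₊`,
while `v → -∞` along a second one.

On the other hand both speeds are eventually at least `λ(-1)` in absolute value and of opposite
sign, so `x₁ - x₂ → +∞` and `x₁ - x₂` takes integer values at arbitrarily late times. At such a time
periodicity forces `v(t, x₁) = v(t, x₂)`, whereas for late times `v(t, x₁) > 0 > v(t, x₂)`.
-/

/-- `q(w) = ∫_w^0 √(-p'(s)) ds`. -/
noncomputable def qfun (p : ℝ → ℝ) (w : ℝ) : ℝ :=
  ∫ s in w..(0:ℝ), Real.sqrt (-(deriv p s))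

/-- `(u, v)` solves the p-system `u_t = -v_x`, `v_t = (p(u))_x` on the domain `D`. -/
def PSystem (p : ℝ → ℝ) (u v : ℝ × ℝ → ℝ) (D : Set (ℝ × ℝ)) : Prop :=
  ∀ z ∈ D,
    deriv (fun s => u (s, z.2)) z.1 = -deriv (fun y => v (z.1, y)) z.2 ∧
    deriv (fun s => v (s, z.2)) z.1 = deriv (fun y => p (u (z.1, y))) z.2

open Filter Topology Set

lemma qfun_hasDerivAt {p : ℝ → ℝ} (hp : ContDiff ℝ 2 p) (w : ℝ) :
    HasDerivAt (qfun p) (-Real.sqrt (-(deriv p w))) w := by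
  have hc : Continuous fun s => Real.sqrt (-(deriv p s)) :=
    ((hp.continuous_deriv (by norm_num)).neg).sqrt
  exact intervalIntegral.integral_hasDerivAt_left (hc.intervalIntegrable _ _)
    (hc.stronglyMeasurableAtFilter _ _) hc.continuousAt

lemma speed_pos {p : ℝ → ℝ} (hconv : ∀ w : ℝ, 0 < deriv (deriv p) w) (hp'0 : deriv p 0 = 0)
    {w : ℝ} (hw : w < 0) : 0 < -deriv p w := by
  have := strictMono_of_deriv_pos hconv hw
  linarith

lemma speed_ge {p : ℝ → ℝ} (hconv : ∀ w : ℝ, 0 < deriv (deriv p) w)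
    {w : ℝ} (hw : w ≤ -1) : Real.sqrt (-(deriv p (-1))) ≤ Real.sqrt (-(deriv p w)) := by
  have := (strictMono_of_deriv_pos hconv).monotone hw
  exact Real.sqrt_le_sqrt (by linarith)

lemma qfun_tendsto {p : ℝ → ℝ} (hp : ContDiff ℝ 2 p) (hconv : ∀ w : ℝ, 0 < deriv (deriv p) w)
    (hp'0 : deriv p 0 = 0) : Tendsto (qfun p) atBot atTop := by
  set m := Real.sqrt (-(deriv p (-1))) with hm
  have hmpos : 0 < m := Real.sqrt_pos.2 (speed_pos hconv hp'0 (by norm_num))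
  have hd : ∀ w, HasDerivAt (fun w => qfun p w + m * w)
      (-Real.sqrt (-(deriv p w)) + m * 1) w := fun w =>
    (qfun_hasDerivAt hp w).add ((hasDerivAt_id w).const_mul m)
  have hanti : AntitoneOn (fun w => qfun p w + m * w) (Iic (-1)) := by
    apply antitoneOn_of_deriv_nonpos (convex_Iic _)
    · exact fun w _ => (hd w).continuousAt.continuousWithinAt
    · exact fun w _ => (hd w).differentiableAt.differentiableWithinAt
    · intro w hw
      rw [interior_Iic] at hw
      rw [(hd w).deriv]
      have := speed_ge hconv (le_of_lt hw)
      linarith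
  have hlin : Tendsto (fun w : ℝ => -m * w + (qfun p (-1) + m * (-1))) atBot atTop :=
    tendsto_atTop_add_const_right _ _ (tendsto_id.const_mul_atBot_of_neg (by linarith))
  refine tendsto_atTop_mono' _ ?_ hlin
  filter_upwards [eventually_le_atBot (-1 : ℝ)] with w hw
  have := hanti hw (self_mem_Iic (a := (-1 : ℝ))) hw
  simp only at this
  linarith

/-- Chain rule along the graph of a curve, in terms of the partial derivatives. -/
lemma hasDerivAt_along {f : ℝ × ℝ → ℝ} {x : ℝ → ℝ} {t s : ℝ}
    (hf : DifferentiableAt ℝ f (t, x t)) (hx : HasDerivAt x s t) :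
    HasDerivAt (fun τ => f (τ, x τ))
      (deriv (fun τ => f (τ, x t)) t + s * deriv (fun y => f (t, y)) (x t)) t := by
  have h1 : HasDerivAt (fun τ => f (τ, x t)) (fderiv ℝ f (t, x t) (1, 0)) t :=
    HasFDerivAt.comp_hasDerivAt (f := fun τ => (τ, x t)) t hf.hasFDerivAt
      ((hasDerivAt_id t).prodMk (hasDerivAt_const t (x t)))
  have h2 : HasDerivAt (fun y => f (t, y)) (fderiv ℝ f (t, x t) (0, 1)) (x t) :=
    HasFDerivAt.comp_hasDerivAt (f := fun y => (t, y)) (x t) hf.hasFDerivAt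
      ((hasDerivAt_const (x t) t).prodMk (hasDerivAt_id (x t)))
  have h3 : HasDerivAt (fun τ => f (τ, x τ)) (fderiv ℝ f (t, x t) (1, s)) t :=
    HasFDerivAt.comp_hasDerivAt (f := fun τ => (τ, x τ)) t hf.hasFDerivAt
      ((hasDerivAt_id t).prodMk hx)
  rw [h1.deriv, h2.deriv]
  convert h3 using 1
  have : ((1 : ℝ), s) = (1, 0) + s • ((0 : ℝ), (1 : ℝ)) := by simp
  rw [this, map_add, map_smul, smul_eq_mul]

lemma differentiableAt_of_lt {f : ℝ × ℝ → ℝ} {t₀ t x : ℝ}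
    (hf : ContDiffOn ℝ 2 f {z : ℝ × ℝ | t₀ ≤ z.1}) (ht : t₀ < t) :
    DifferentiableAt ℝ f (t, x) := by
  have hn : {z : ℝ × ℝ | t₀ ≤ z.1} ∈ 𝓝 (t, x) := by
    have ho : IsOpen {z : ℝ × ℝ | t₀ < z.1} := isOpen_lt continuous_const continuous_fst
    exact mem_of_superset (ho.mem_nhds ht) fun z (hz : t₀ < z.1) => hz.le
  exact (hf.contDiffAt hn).differentiableAt (by norm_num)

/-- The Riemann invariants: `v - σ q(u)` is constant along a characteristic of speed `σ √(-p'(u))`,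
where `σ = 1` for the first eigenvalue and `σ = -1` for the second. Times start at `t₀ + 1` to stay
in the interior of the domain. -/
lemma riemann_const {p : ℝ → ℝ} (hp : ContDiff ℝ 2 p) (hconv : ∀ w : ℝ, 0 < deriv (deriv p) w)
    (hp'0 : deriv p 0 = 0) {t₀ : ℝ} {u v : ℝ × ℝ → ℝ}
    (hu : ContDiffOn ℝ 2 u {z : ℝ × ℝ | t₀ ≤ z.1})
    (hv : ContDiffOn ℝ 2 v {z : ℝ × ℝ | t₀ ≤ z.1})
    (hsys : PSystem p u v {z : ℝ × ℝ | t₀ ≤ z.1})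
    {σ : ℝ} (hσ : σ * σ = 1) {x : ℝ → ℝ}
    (hhyp : ∀ t, t₀ ≤ t → u (t, x t) < 0)
    (hchar : ∀ t, t₀ ≤ t → HasDerivAt x (σ * Real.sqrt (-(deriv p (u (t, x t))))) t) :
    ∃ c, ∀ t, t₀ + 1 ≤ t → v (t, x t) = σ * qfun p (u (t, x t)) + c := by
  have hd : ∀ t, t₀ < t →
      HasDerivAt (fun τ => v (τ, x τ) - σ * qfun p (u (τ, x τ))) 0 t := by
    intro t ht
    have hdu := differentiableAt_of_lt (x := x t) hu ht
    have hdv := differentiableAt_of_lt (x := x t) hv ht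
    have hut := hasDerivAt_along hdu (hchar t ht.le)
    have hvt := hasDerivAt_along hdv (hchar t ht.le)
    have hq := HasDerivAt.comp (h := fun τ => u (τ, x τ)) t (qfun_hasDerivAt hp (u (t, x t))) hut
    obtain ⟨e1, e2⟩ := hsys (t, x t) ht.le
    have huy : DifferentiableAt ℝ (fun y => u (t, y)) (x t) :=
      DifferentiableAt.comp (f := fun y => (t, y)) (x t) hdu (by fun_prop)
    have e3 : deriv (fun y => p (u (t, y))) (x t)
        = deriv p (u (t, x t)) * deriv (fun y => u (t, y)) (x t) :=
      (((hp.differentiable (by norm_num)) (u (t, x t))).hasDerivAt.comp (x t)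
        huy.hasDerivAt).deriv
    have hs := Real.mul_self_sqrt (speed_pos hconv hp'0 (hhyp t ht.le)).le
    simp only at e1 e2
    rw [e3] at e2
    refine (hvt.sub (hq.const_mul σ)).congr_deriv ?_
    rw [e1, e2]
    linear_combination (deriv (fun y => u (t, y)) (x t)) *
      (Real.sqrt (-(deriv p (u (t, x t)))) * Real.sqrt (-(deriv p (u (t, x t))))) * hσ +
      deriv (fun y => u (t, y)) (x t) * hs
  refine ⟨v (t₀ + 1, x (t₀ + 1)) - σ * qfun p (u (t₀ + 1, x (t₀ + 1))), fun t ht => ?_⟩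
  have := (convex_Ioi t₀).is_const_of_fderivWithin_eq_zero (𝕜 := ℝ)
    (f := fun τ => v (τ, x τ) - σ * qfun p (u (τ, x τ)))
    (fun τ hτ => (hd τ hτ).differentiableAt.differentiableWithinAt)
    (fun τ hτ => by
      rw [fderivWithin_of_isOpen isOpen_Ioi hτ]
      ext
      simp [(hd τ hτ).deriv])
    (show t ∈ Ioi t₀ from by simp only [mem_Ioi]; linarith)
    (show t₀ + 1 ∈ Ioi t₀ from by simp)
  linarith

/-- Lemma 2.2, forward time: for a `C²` solution of the p-system on `[t₀,∞) × ℝ`,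
1-periodic in `x`, there cannot exist a characteristic `x₁` of the first eigenvalue
`λ₁(u) = √(-p'(u))` and a characteristic `x₂` of the second eigenvalue
`λ₂(u) = -√(-p'(u))`, both defined on `[t₀, ∞)` and both of class `B₊`, i.e. with
`-u(t, xᵢ(t)) → +∞` as `t → +∞`. -/
theorem psystem_no_two_Bplus_characteristics
    (p : ℝ → ℝ) (hp : ContDiff ℝ 2 p) (hconv : ∀ w : ℝ, 0 < deriv (deriv p) w)
    (hp0 : p 0 = 0) (hp'0 : deriv p 0 = 0)
    (t₀ : ℝ) (u v : ℝ × ℝ → ℝ)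
    (hu : ContDiffOn ℝ 2 u {z : ℝ × ℝ | t₀ ≤ z.1})
    (hv : ContDiffOn ℝ 2 v {z : ℝ × ℝ | t₀ ≤ z.1})
    (hsys : PSystem p u v {z : ℝ × ℝ | t₀ ≤ z.1})
    (huper : ∀ t x : ℝ, u (t, x + 1) = u (t, x))
    (hvper : ∀ t x : ℝ, v (t, x + 1) = v (t, x))
    (x₁ x₂ : ℝ → ℝ)
    (hhyp₁ : ∀ t, t₀ ≤ t → u (t, x₁ t) < 0)
    (hhyp₂ : ∀ t, t₀ ≤ t → u (t, x₂ t) < 0)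
    (hchar₁ : ∀ t, t₀ ≤ t →
      HasDerivAt x₁ (Real.sqrt (-(deriv p (u (t, x₁ t))))) t)
    (hchar₂ : ∀ t, t₀ ≤ t →
      HasDerivAt x₂ (-Real.sqrt (-(deriv p (u (t, x₂ t))))) t)
    (hB₁ : Filter.Tendsto (fun t => -u (t, x₁ t)) Filter.atTop Filter.atTop)
    (hB₂ : Filter.Tendsto (fun t => -u (t, x₂ t)) Filter.atTop Filter.atTop) :
    False := by
  obtain ⟨c₁, hc₁⟩ := riemann_const hp hconv hp'0 hu hv hsys (σ := 1) (by norm_num) hhyp₁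
    (by simpa using hchar₁)
  obtain ⟨c₂, hc₂⟩ := riemann_const hp hconv hp'0 hu hv hsys (σ := -1) (by norm_num) hhyp₂
    (by simpa using hchar₂)
  have hU₁ := tendsto_neg_atTop_iff.1 hB₁
  have hU₂ := tendsto_neg_atTop_iff.1 hB₂
  have hq := qfun_tendsto hp hconv hp'0
  obtain ⟨T, hT⟩ := eventually_atTop.1 <|
    (((eventually_ge_atTop (t₀ + 1)).and
      ((hq.comp hU₁).eventually_gt_atTop (-c₁))).and
      ((hq.comp hU₂).eventually_gt_atTop c₂)).and
      ((hU₁.eventually_le_atBot (-1)).and (hU₂.eventually_le_atBot (-1)))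
  set m := Real.sqrt (-(deriv p (-1))) with hm
  have hmpos : 0 < m := Real.sqrt_pos.2 (speed_pos hconv hp'0 (by norm_num))
  have hTt : ∀ t, T ≤ t → t₀ ≤ t := fun t ht => by linarith [(hT t ht).1.1.1]
  have hd : ∀ t, T ≤ t → HasDerivAt (fun t => x₁ t - x₂ t - m * t) _ t := fun t ht =>
    ((hchar₁ t (hTt t ht)).sub (hchar₂ t (hTt t ht))).sub ((hasDerivAt_id t).const_mul m)
  have hmono : MonotoneOn (fun t => x₁ t - x₂ t - m * t) (Ici T) := by
    apply monotoneOn_of_deriv_nonneg (convex_Ici T)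
    · exact fun t ht => (hd t ht).continuousAt.continuousWithinAt
    · exact fun t ht => (hd t (interior_subset ht)).differentiableAt.differentiableWithinAt
    · intro t ht
      have ht' := interior_subset ht
      rw [(hd t ht').deriv]
      have h1 := speed_ge hconv (hT t ht').2.1
      have h2 := Real.sqrt_nonneg (-(deriv p (u (t, x₂ t))))
      linarith
  -- Over a time interval of length `1 / m` the gap `x₁ - x₂` grows by at least `1`,
  -- hence passes through an integer.
  have hTS : T ≤ T + 1 / m := by linarith [one_div_pos.2 hmpos]
  have hgrow := hmono (self_mem_Ici (a := T)) (show T + 1 / m ∈ Ici T from hTS) hTS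
  have hone : m * (T + 1 / m) = m * T + 1 := by field_simp
  simp only [hone] at hgrow
  have hcont : ContinuousOn (fun t => x₁ t - x₂ t) (Icc T (T + 1 / m)) := fun t ht =>
    ((hchar₁ t (hTt t ht.1)).sub (hchar₂ t (hTt t ht.1))).continuousAt.continuousWithinAt
  obtain ⟨t, ht, hgap⟩ := intermediate_value_Icc hTS hcont
    (show ((⌈x₁ T - x₂ T⌉ : ℤ) : ℝ) ∈ Icc _ _ from
      ⟨Int.le_ceil _, by linarith [Int.ceil_lt_add_one (x₁ T - x₂ T)]⟩)
  have hx : x₁ t = x₂ t + (⌈x₁ T - x₂ T⌉ : ℤ) * 1 := by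
    simp only at hgap
    linarith
  have hveq : v (t, x₁ t) = v (t, x₂ t) := by
    rw [hx]
    exact Function.Periodic.int_mul (f := fun y => v (t, y)) (hvper t) _ _
  obtain ⟨⟨⟨h0, h1⟩, h2⟩, -⟩ := hT t ht.1
  have e1 := hc₁ t h0
  have e2 := hc₂ t h0
  simp only [Function.comp_apply] at h1 h2
  linarith
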